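/- Assume (H1) with α₁ > 0 and α₂ > 0, the quantitative forms of (H2) and (H3), and condition (H4): for each y with |y| ≤ R, the map x ↦ f(x,y)/x is strictly increasing on (0,∞). Then for every u ∈ K₁ \ {0} and every v ∈ C([0,1],ℝ) with |v|_∞ ≤ R, there exists a unique σ* > 0 such that 𝓕(T₁(σ*·u, v), σ*·u) = 0. -/

import Mathlib

/-!
STATEMENT 14: Assume (H1) with α₁ > 0 and α₂ > 0, the quantitative forms of (H2)
and (H3), and condition (H4): for each y with |y| ≤ R, the map x ↦ f(x,y)/x is
strictly increasing on (0,∞).  Then for every u ∈ K₁ \ {0} and every v ∈ C([0,1],ℝ)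
with |v|_∞ ≤ R, there exists a unique σ* > 0 such that 𝓕(T₁(σ*·u, v), σ*·u) = 0.

Here 𝓕(ũ, u) = ∫₀¹ (ũ(t) − u(t))·u(t) dt and T₁(u,v)(t) = ∫₀¹ k₁(t,θ) f(u(θ),v(θ)) dθ.
Elements of C([0,1],ℝ) are modelled as functions ℝ → ℝ that are continuous on [0,1].
-/

/-- The sup norm on `[0,1]`: `|u|_∞ = max_{t ∈ [0,1]} |u t|`. -/
noncomputable def supNorm (u : ℝ → ℝ) : ℝ :=
  sSup ((fun t => |u t|) '' Set.Icc (0:ℝ) 1)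

/-- Membership in the cone
`K₁ = {u ∈ C([0,1],ℝ) : u ≥ 0 and min_{t∈[a,b]} u(t) ≥ c₁ |u|_∞}`. -/
def memK₁ (a b c₁ : ℝ) (u : ℝ → ℝ) : Prop :=
  ContinuousOn u (Set.Icc 0 1) ∧ (∀ t ∈ Set.Icc (0:ℝ) 1, 0 ≤ u t) ∧
    ∀ t ∈ Set.Icc a b, c₁ * supNorm u ≤ u t

/-- The value `𝓕(T₁(σu,v), σu)` where `𝓕(ũ,u) = ∫₀¹ (ũ(t) − u(t))·u(t) dt` and
`T₁(u,v)(t) = ∫₀¹ k₁(t,θ) f(u(θ),v(θ)) dθ`. -/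
noncomputable def nehariF (k₁ : ℝ → ℝ → ℝ) (f : ℝ → ℝ → ℝ) (u v : ℝ → ℝ) (σ : ℝ) : ℝ :=
  ∫ t in (0:ℝ)..1,
    ((∫ θ in (0:ℝ)..1, k₁ t θ * f (σ * u θ) (v θ)) - σ * u t) * (σ * u t)

/-!
Fubini moves the kernel onto the second factor of `⟨T(σu), u⟩`, so that after division by `σ²` the
Nehari equation reads `∫ kᵀu · f(σu, v)/σ dθ = ∫ u²`. The left-hand side is strictly increasing
in `σ` by (H4), since the weight `kᵀu ≥ 0` does not vanish on all of `[a, b]`, where `u > 0`; it is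
continuous because an integrand monotone in `σ` is dominated by its values at two endpoints. At
`σ = δ₀/|u|_∞`, (H2) and the Cauchy–Schwarz inequality `(∫ u)² ≤ ∫ u²` bound it above by `∫ u²`; at
`σ = x₀/(c₁|u|_∞)`, (H3) on `[a, b]` bounds it below by `|u|_∞² ≥ ∫ u²`.
-/

open MeasureTheory Set Function

lemma existsUnique_mem_eq_of_strictMonoOn {ι β : Type*} [TopologicalSpace ι] [LinearOrder ι]
    [TopologicalSpace β] [LinearOrder β] [OrderClosedTopology β] {s : Set ι} {φ : ι → β}
    (hs : IsPreconnected s) (hmono : StrictMonoOn φ s) (hcont : ContinuousOn φ s)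
    {x y : ι} (hx : x ∈ s) (hy : y ∈ s) {c : β} (hxc : φ x ≤ c) (hcy : c ≤ φ y) :
    ∃! z, z ∈ s ∧ φ z = c := by
  obtain ⟨z, hz, rfl⟩ := hs.intermediate_value hx hy hcont ⟨hxc, hcy⟩
  exact ⟨z, ⟨hz, rfl⟩, fun w hw => hmono.injOn hw.1 hz hw.2⟩

lemma continuous_domRestrict_prod {α β γ : Type*} [TopologicalSpace α] [TopologicalSpace β]
    [TopologicalSpace γ] {k : α → β → γ} {s : Set α} {t : Set β}
    (hk : ContinuousOn (fun p : α × β => k p.1 p.2) (s ×ˢ t)) :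
    Continuous (fun p : s × t => k p.1 p.2) :=
  hk.comp_continuous (f := fun p : s × t => ((p.1 : α), (p.2 : β)))
    (by fun_prop) fun p => ⟨p.1.2, p.2.2⟩

lemma strictMonoOn_apply_mul_div {φ : ℝ → ℝ} (hφ : StrictMonoOn (fun x => φ x / x) (Ioi 0))
    {x : ℝ} (hx : 0 < x) : StrictMonoOn (fun σ => φ (σ * x) / σ) (Ioi 0) := by
  have hratio : EqOn (fun σ => φ (σ * x) / σ) (fun σ => x * (φ (σ * x) / (σ * x))) (Ioi 0) :=
    fun σ (hσ : 0 < σ) => by field_simp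
  refine StrictMonoOn.congr (fun s hs r hr hsr => ?_) hratio.symm
  exact mul_lt_mul_of_pos_left
    (hφ (mul_pos hs hx) (mul_pos hr hx) (mul_lt_mul_of_pos_right hsr hx)) hx

lemma monotoneOn_apply_mul_div {φ : ℝ → ℝ} (hφ : MonotoneOn (fun x => φ x / x) (Ioi 0))
    (hφ0 : φ 0 = 0) {x : ℝ} (hx : 0 ≤ x) : MonotoneOn (fun σ => φ (σ * x) / σ) (Ioi 0) := by
  rcases hx.eq_or_lt with rfl | hx
  · simp [hφ0, monotoneOn_const]
  · have hratio : EqOn (fun σ => x * (φ (σ * x) / (σ * x))) (fun σ => φ (σ * x) / σ) (Ioi 0) :=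
      fun σ (hσ : 0 < σ) => by field_simp
    refine MonotoneOn.congr (fun s hs r hr hsr => ?_) hratio
    exact mul_le_mul_of_nonneg_left
      (hφ (mul_pos hs hx) (mul_pos hr hx) (mul_le_mul_of_nonneg_right hsr hx.le)) hx.le

section Integral

variable {X : Type*} [MeasurableSpace X] {μ : Measure X}

lemma continuousOn_integral_of_monotoneOn {h : ℝ → X → ℝ} {s : Set ℝ} (hs : IsOpen s)
    (hint : ∀ σ ∈ s, Integrable (h σ) μ) (hmono : ∀ x, MonotoneOn (fun σ => h σ x) s)
    (hcont : ∀ x, ContinuousOn (fun σ => h σ x) s) :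
    ContinuousOn (fun σ => ∫ x, h σ x ∂μ) s := by
  intro σ hσ
  obtain ⟨l, r, hlr, hnhds, hsub⟩ := exists_Icc_mem_subset_of_mem_nhds (hs.mem_nhds hσ)
  have hl : l ∈ s := hsub (left_mem_Icc.2 (hlr.1.trans hlr.2))
  have hr : r ∈ s := hsub (right_mem_Icc.2 (hlr.1.trans hlr.2))
  refine (continuousAt_of_dominated (bound := fun x => |h l x| + |h r x|) ?_ ?_
    ((hint l hl).abs.add (hint r hr).abs) ?_).continuousWithinAt
  · filter_upwards [hnhds] with τ hτ using (hint τ (hsub hτ)).aestronglyMeasurable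
  · filter_upwards [hnhds] with τ hτ
    refine .of_forall fun x => (abs_le_max_abs_abs (hmono x hl (hsub hτ) hτ.1)
      (hmono x (hsub hτ) hr hτ.2)).trans (max_le_add_of_nonneg (abs_nonneg _) (abs_nonneg _))
  · exact .of_forall fun x => (hcont x).continuousAt (hs.mem_nhds hσ)

lemma strictMonoOn_integral {ι : Type*} [Preorder ι] {h : ι → X → ℝ} {s : Set ι}
    (hint : ∀ σ ∈ s, Integrable (h σ) μ) (hmono : ∀ x, MonotoneOn (fun σ => h σ x) s)
    {E : Set X} (hE : μ E ≠ 0) (hstrict : ∀ x ∈ E, StrictMonoOn (fun σ => h σ x) s) :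
    StrictMonoOn (fun σ => ∫ x, h σ x ∂μ) s := by
  intro σ hσ τ hτ hlt
  rw [← sub_pos, ← integral_sub (hint τ hτ) (hint σ hσ),
    integral_pos_iff_support_of_nonneg (fun x => sub_nonneg.2 (hmono x hσ hτ hlt.le))
      ((hint τ hτ).sub (hint σ hσ))]
  exact (pos_iff_ne_zero.2 hE).trans_le
    (measure_mono fun x hx => (sub_pos.2 (hstrict x hx hσ hτ hlt)).ne')

lemma sq_integral_le_measureReal_univ_mul_integral_sq [IsFiniteMeasure μ] {u : X → ℝ}
    (hu : MemLp u 2 μ) : (∫ t, u t ∂μ) ^ 2 ≤ μ.real univ * ∫ t, u t ^ 2 ∂μ := by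
  set m := μ.real univ
  set A := ∫ t, u t ∂μ
  have hu₁ : Integrable u μ := hu.integrable one_le_two
  have hexpand : ∫ t, (m * u t - A) ^ 2 ∂μ = m * (m * (∫ t, u t ^ 2 ∂μ) - A ^ 2) := by
    calc ∫ t, (m * u t - A) ^ 2 ∂μ = ∫ t, m ^ 2 * u t ^ 2 - 2 * m * A * u t + A ^ 2 ∂μ := by
          congr with t; ring
      _ = m ^ 2 * (∫ t, u t ^ 2 ∂μ) - 2 * m * A * A + m * A ^ 2 := by
          have hint₂ := hu.integrable_sq.const_mul (m ^ 2)
          have hint₁ := hu₁.const_mul (2 * m * A)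
          rw [integral_add (hint₂.sub' hint₁) (integrable_const _), integral_sub hint₂ hint₁,
            integral_const_mul, integral_const_mul, integral_const, smul_eq_mul]
      _ = _ := by ring
  rcases (measureReal_nonneg : 0 ≤ m).eq_or_lt with hm | hm
  · have hμ : μ = 0 := Measure.measure_univ_eq_zero.1 ((measureReal_eq_zero_iff).1 hm.symm)
    simp [A, hμ]
  · have hnonneg : 0 ≤ ∫ t, (m * u t - A) ^ 2 ∂μ := integral_nonneg fun t => sq_nonneg _
    rw [hexpand] at hnonneg
    exact sub_nonneg.1 (nonneg_of_mul_nonneg_right hnonneg hm)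

end Integral

section FiberingMap

variable {X : Type*} [MeasurableSpace X]

/-- The functional `σ ↦ 𝓕(T(σu), σu)` on a measure space, where `T u = ∫ k(·, θ) g(θ, u(θ)) dμ(θ)`
is the Hammerstein operator with kernel `k` and a position-dependent nonlinearity `g`; the
dependence on `v` in `nehariF` is absorbed in `g`. -/
noncomputable def nehariFunctional (μ : Measure X) (k : X → X → ℝ) (g : X → ℝ → ℝ) (u : X → ℝ)
    (σ : ℝ) : ℝ :=
  ∫ t, ((∫ θ, k t θ * g θ (σ * u θ) ∂μ) - σ * u t) * (σ * u t) ∂μ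

/-- The transposed integral operator `(kᵀu)(θ) = ∫ k(t, θ) u(t) dμ(t)`. -/
noncomputable def transposeIntegral (μ : Measure X) (k : X → X → ℝ) (u : X → ℝ) (θ : X) : ℝ :=
  ∫ t, k t θ * u t ∂μ

/-- The fibering ratio `⟨T(σu), u⟩ / σ`, with the kernel moved onto the second factor. For `σ > 0`
the Nehari equation `nehariFunctional μ k g u σ = 0` says that it equals `∫ u²`. -/
noncomputable def fiberingRatio (μ : Measure X) (k : X → X → ℝ) (g : X → ℝ → ℝ) (u : X → ℝ)
    (σ : ℝ) : ℝ :=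
  ∫ θ, transposeIntegral μ k u θ * (g θ (σ * u θ) / σ) ∂μ

variable {μ : Measure X} {k : X → X → ℝ} {g : X → ℝ → ℝ} {u : X → ℝ} {α c m σ : ℝ} {E : Set X}

lemma transposeIntegral_nonneg (hk₀ : ∀ t θ, 0 ≤ k t θ) (hu₀ : ∀ t, 0 ≤ u t) (θ : X) :
    0 ≤ transposeIntegral μ k u θ :=
  integral_nonneg fun t => mul_nonneg (hk₀ t θ) (hu₀ t)

lemma abs_transposeIntegral_le (hkα : ∀ t θ, |k t θ| ≤ α) (hu : Integrable u μ) (θ : X) :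
    |transposeIntegral μ k u θ| ≤ α * ∫ t, |u t| ∂μ := by
  rw [← integral_const_mul, ← Real.norm_eq_abs]
  refine norm_integral_le_of_norm_le (hu.abs.const_mul α) (.of_forall fun t => ?_)
  rw [Real.norm_eq_abs, abs_mul]
  exact mul_le_mul_of_nonneg_right (hkα t θ) (abs_nonneg _)

lemma integrable_kernel_mul_mul [SFinite μ] (hk : Measurable (uncurry k))
    (hkα : ∀ t θ, |k t θ| ≤ α) {w : X → ℝ} (hu : Integrable u μ) (hw : Integrable w μ) :
    Integrable (uncurry fun t θ => k t θ * w θ * u t) (μ.prod μ) := by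
  refine ((hu.mul_prod hw).bdd_mul hk.aestronglyMeasurable
    (.of_forall fun p => hkα p.1 p.2)).congr (.of_forall fun p => ?_)
  simp only [uncurry, mul_comm (u p.1), mul_assoc]

lemma integral_kernel_mul_mul_eq (w : X → ℝ) (θ : X) :
    ∫ t, k t θ * w θ * u t ∂μ = transposeIntegral μ k u θ * w θ := by
  simp only [mul_right_comm (k _ θ) (w θ), integral_mul_const, transposeIntegral]

lemma integrable_transposeIntegral_mul [SFinite μ] (hk : Measurable (uncurry k))
    (hkα : ∀ t θ, |k t θ| ≤ α) {w : X → ℝ} (hu : Integrable u μ) (hw : Integrable w μ) :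
    Integrable (fun θ => transposeIntegral μ k u θ * w θ) μ := by
  simpa only [uncurry_apply_pair, integral_kernel_mul_mul_eq] using
    (integrable_kernel_mul_mul hk hkα hu hw).integral_prod_right

lemma integral_integral_kernel_mul_mul [SFinite μ] (hk : Measurable (uncurry k))
    (hkα : ∀ t θ, |k t θ| ≤ α) {w : X → ℝ} (hu : Integrable u μ) (hw : Integrable w μ) :
    ∫ t, (∫ θ, k t θ * w θ ∂μ) * u t ∂μ = ∫ θ, transposeIntegral μ k u θ * w θ ∂μ := by
  simpa only [integral_mul_const, integral_kernel_mul_mul_eq] using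
    integral_integral_swap (integrable_kernel_mul_mul hk hkα hu hw)

lemma nehariFunctional_eq [SFinite μ] (hk : Measurable (uncurry k)) (hkα : ∀ t θ, |k t θ| ≤ α)
    (hu : Integrable u μ) (hu₂ : Integrable (fun t => u t ^ 2) μ)
    (hg : Integrable (fun θ => g θ (σ * u θ)) μ) (hσ : σ ≠ 0) :
    nehariFunctional μ k g u σ = σ ^ 2 * (fiberingRatio μ k g u σ - ∫ t, u t ^ 2 ∂μ) := by
  have hint : Integrable (fun t => (∫ θ, k t θ * g θ (σ * u θ) ∂μ) * u t) μ := by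
    simpa only [uncurry_apply_pair, integral_mul_const] using
      (integrable_kernel_mul_mul hk hkα hu hg).integral_prod_left
  calc nehariFunctional μ k g u σ
      = ∫ t, σ * ((∫ θ, k t θ * g θ (σ * u θ) ∂μ) * u t) - σ ^ 2 * u t ^ 2 ∂μ := by
        unfold nehariFunctional; congr with t; ring
    _ = σ * (∫ θ, transposeIntegral μ k u θ * g θ (σ * u θ) ∂μ) - σ ^ 2 * ∫ t, u t ^ 2 ∂μ := by
        rw [integral_sub (hint.const_mul _) (hu₂.const_mul _), integral_const_mul,
          integral_const_mul, integral_integral_kernel_mul_mul hk hkα hu hg]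
    _ = σ ^ 2 * (fiberingRatio μ k g u σ - ∫ t, u t ^ 2 ∂μ) := by
        simp only [fiberingRatio, ← mul_div_assoc, integral_div]
        field_simp

lemma nehariFunctional_eq_zero_iff [SFinite μ] (hk : Measurable (uncurry k))
    (hkα : ∀ t θ, |k t θ| ≤ α) (hu : Integrable u μ) (hu₂ : Integrable (fun t => u t ^ 2) μ)
    (hg : Integrable (fun θ => g θ (σ * u θ)) μ) (hσ : σ ≠ 0) :
    nehariFunctional μ k g u σ = 0 ↔ fiberingRatio μ k g u σ = ∫ t, u t ^ 2 ∂μ := by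
  rw [nehariFunctional_eq hk hkα hu hu₂ hg hσ, mul_eq_zero_iff_left (pow_ne_zero 2 hσ),
    sub_eq_zero]

lemma continuousOn_fiberingRatio [SFinite μ] (hk : Measurable (uncurry k))
    (hk₀ : ∀ t θ, 0 ≤ k t θ) (hkα : ∀ t θ, |k t θ| ≤ α) (hu : Integrable u μ) (hu₀ : ∀ t, 0 ≤ u t)
    (hg : ∀ σ > 0, Integrable (fun θ => g θ (σ * u θ)) μ) (hg₀ : ∀ θ, g θ 0 = 0)
    (hmono : ∀ θ, MonotoneOn (fun x => g θ x / x) (Ioi 0))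
    (hcont : ∀ θ, ContinuousOn (g θ) (Ici 0)) :
    ContinuousOn (fiberingRatio μ k g u) (Ioi 0) := by
  refine continuousOn_integral_of_monotoneOn isOpen_Ioi
    (fun σ hσ => integrable_transposeIntegral_mul hk hkα hu ((hg σ hσ).div_const σ))
    (fun θ => (monotone_mul_left_of_nonneg (transposeIntegral_nonneg hk₀ hu₀ θ)).comp_monotoneOn
      (monotoneOn_apply_mul_div (hmono θ) (hg₀ θ) (hu₀ θ))) fun θ => ?_
  have hmaps : MapsTo (fun σ => σ * u θ) (Ioi 0) (Ici 0) :=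
    fun σ hσ => mul_nonneg (le_of_lt hσ) (hu₀ θ)
  exact continuousOn_const.mul
    (((hcont θ).comp (by fun_prop) hmaps).div continuousOn_id fun σ hσ => (ne_of_gt hσ))

lemma strictMonoOn_fiberingRatio [SFinite μ] (hk : Measurable (uncurry k))
    (hk₀ : ∀ t θ, 0 ≤ k t θ) (hkα : ∀ t θ, |k t θ| ≤ α) (hu : Integrable u μ) (hu₀ : ∀ t, 0 ≤ u t)
    (hg : ∀ σ > 0, Integrable (fun θ => g θ (σ * u θ)) μ) (hg₀ : ∀ θ, g θ 0 = 0)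
    (hmono : ∀ θ, StrictMonoOn (fun x => g θ x / x) (Ioi 0))
    (hu_pos : ∀ t ∈ E, 0 < u t)
    (hE : 0 < ∫ θ in E, transposeIntegral μ k u θ ∂μ) :
    StrictMonoOn (fiberingRatio μ k g u) (Ioi 0) := by
  have hweight := transposeIntegral_nonneg (μ := μ) hk₀ hu₀
  have hμ : μ (support (transposeIntegral μ k u) ∩ E) ≠ 0 := by
    refine ((setIntegral_pos_iff_support_of_nonneg_ae (.of_forall hweight) ?_).1 hE).ne'
    exact .of_integral_ne_zero hE.ne'
  refine strictMonoOn_integral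
    (fun σ hσ => integrable_transposeIntegral_mul hk hkα hu ((hg σ hσ).div_const σ))
    (fun θ => (monotone_mul_left_of_nonneg (hweight θ)).comp_monotoneOn
      (monotoneOn_apply_mul_div (hmono θ).monotoneOn (hg₀ θ) (hu₀ θ))) hμ fun θ hθ => ?_
  exact (strictMono_mul_left_of_pos ((hweight θ).lt_of_ne' hθ.1)).comp_strictMonoOn
    (strictMonoOn_apply_mul_div (hmono θ) (hu_pos θ hθ.2))

lemma fiberingRatio_le (hk₀ : ∀ t θ, 0 ≤ k t θ) (hkα : ∀ t θ, |k t θ| ≤ α)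
    (hu : Integrable u μ) (hu₀ : ∀ t, 0 ≤ u t) (hg₀ : ∀ θ, 0 ≤ g θ (σ * u θ) / σ)
    (hgc : ∀ θ, g θ (σ * u θ) / σ ≤ c * u θ) :
    fiberingRatio μ k g u σ ≤ c * α * (∫ t, u t ∂μ) ^ 2 := by
  have hweight := transposeIntegral_nonneg (μ := μ) hk₀ hu₀
  have hweight_le (θ : X) : transposeIntegral μ k u θ ≤ α * ∫ t, u t ∂μ := by
    simpa only [abs_of_nonneg (hu₀ _)] using
      (le_abs_self _).trans (abs_transposeIntegral_le hkα hu θ)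
  calc fiberingRatio μ k g u σ ≤ ∫ θ, α * (∫ t, u t ∂μ) * (c * u θ) ∂μ :=
        integral_mono_of_nonneg (.of_forall fun θ => mul_nonneg (hweight θ) (hg₀ θ))
          ((hu.const_mul c).const_mul _) (.of_forall fun θ =>
            mul_le_mul (hweight_le θ) (hgc θ) (hg₀ θ) ((hweight θ).trans (hweight_le θ)))
    _ = c * α * (∫ t, u t ∂μ) ^ 2 := by
        simp only [integral_const_mul]
        ring

lemma mul_setIntegral_transposeIntegral_le_fiberingRatio [SFinite μ] (hk : Measurable (uncurry k))
    (hk₀ : ∀ t θ, 0 ≤ k t θ) (hkα : ∀ t θ, |k t θ| ≤ α) (hu : Integrable u μ)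
    (hu₀ : ∀ t, 0 ≤ u t) (hg : Integrable (fun θ => g θ (σ * u θ)) μ)
    (hg₀ : ∀ θ, 0 ≤ g θ (σ * u θ) / σ) (hE : MeasurableSet E)
    (hEint : IntegrableOn (transposeIntegral μ k u) E μ)
    (hgc : ∀ θ ∈ E, c ≤ g θ (σ * u θ) / σ) :
    c * ∫ θ in E, transposeIntegral μ k u θ ∂μ ≤ fiberingRatio μ k g u σ := by
  have hweight := transposeIntegral_nonneg (μ := μ) hk₀ hu₀
  have hint := integrable_transposeIntegral_mul hk hkα hu (hg.div_const σ)
  calc c * ∫ θ in E, transposeIntegral μ k u θ ∂μ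
      = ∫ θ in E, transposeIntegral μ k u θ * c ∂μ := by rw [integral_mul_const, mul_comm]
    _ ≤ ∫ θ in E, transposeIntegral μ k u θ * (g θ (σ * u θ) / σ) ∂μ :=
        setIntegral_mono_on (hEint.mul_const c) hint.integrableOn hE
          fun θ hθ => mul_le_mul_of_nonneg_left (hgc θ hθ) (hweight θ)
    _ ≤ fiberingRatio μ k g u σ :=
        setIntegral_le_integral hint (.of_forall fun θ => mul_nonneg (hweight θ) (hg₀ θ))

variable [IsFiniteMeasure μ]

lemma integrable_transposeIntegral (hk : Measurable (uncurry k)) (hkα : ∀ t θ, |k t θ| ≤ α)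
    (hu : Integrable u μ) : Integrable (transposeIntegral μ k u) μ := by
  simpa only [mul_one] using integrable_transposeIntegral_mul hk hkα hu (integrable_const 1)

lemma mul_setIntegral_setIntegral_le_setIntegral_transposeIntegral (hk : Measurable (uncurry k))
    (hk₀ : ∀ t θ, 0 ≤ k t θ) (hkα : ∀ t θ, |k t θ| ≤ α) (hu : Integrable u μ)
    (hu₀ : ∀ t, 0 ≤ u t) (hE : MeasurableSet E) (hum : ∀ t ∈ E, m ≤ u t) :
    m * ∫ t in E, ∫ θ in E, k t θ ∂μ ∂μ ≤ ∫ θ in E, transposeIntegral μ k u θ ∂μ := by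
  have hk_int : Integrable (uncurry k) ((μ.restrict E).prod (μ.restrict E)) :=
    .of_bound hk.aestronglyMeasurable α (.of_forall fun p => hkα p.1 p.2)
  have hsection {w : X → ℝ} (hw : Integrable w μ) (θ : X) : Integrable (fun t => k t θ * w t) μ :=
    hw.bdd_mul hk.of_uncurry_right.aestronglyMeasurable (.of_forall fun t => hkα t θ)
  rw [integral_integral_swap hk_int, ← integral_const_mul]
  refine setIntegral_mono (hk_int.integral_prod_right.const_mul m)
    (integrable_transposeIntegral hk hkα hu).integrableOn fun θ => ?_
  calc m * ∫ t in E, k t θ ∂μ = ∫ t in E, k t θ * m ∂μ := by rw [integral_mul_const, mul_comm]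
    _ ≤ ∫ t in E, k t θ * u t ∂μ :=
        setIntegral_mono_on (hsection (integrable_const m) θ).integrableOn
          (hsection hu θ).integrableOn hE fun t ht => mul_le_mul_of_nonneg_left (hum t ht) (hk₀ t θ)
    _ ≤ transposeIntegral μ k u θ :=
        setIntegral_le_integral (hsection hu θ) (.of_forall fun t => mul_nonneg (hk₀ t θ) (hu₀ t))

lemma fiberingRatio_le_integral_sq (hk₀ : ∀ t θ, 0 ≤ k t θ) (hα : 0 ≤ α)
    (hkα : ∀ t θ, |k t θ| ≤ α) (hu : MemLp u 2 μ) (hu₀ : ∀ t, 0 ≤ u t)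
    (hg₀ : ∀ θ, 0 ≤ g θ (σ * u θ) / σ) (hc : 0 ≤ c) (hcα : c * α * μ.real univ ≤ 1)
    (hgc : ∀ θ, g θ (σ * u θ) / σ ≤ c * u θ) :
    fiberingRatio μ k g u σ ≤ ∫ t, u t ^ 2 ∂μ := by
  calc fiberingRatio μ k g u σ ≤ c * α * (∫ t, u t ∂μ) ^ 2 :=
        fiberingRatio_le hk₀ hkα (hu.integrable one_le_two) hu₀ hg₀ hgc
    _ ≤ c * α * (μ.real univ * ∫ t, u t ^ 2 ∂μ) := by
        gcongr
        exact sq_integral_le_measureReal_univ_mul_integral_sq hu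
    _ ≤ ∫ t, u t ^ 2 ∂μ := by
        rw [← mul_assoc]
        exact mul_le_of_le_one_left (integral_nonneg fun t => sq_nonneg _) hcα

lemma integral_sq_le_fiberingRatio {M c₁ : ℝ} (hk : Measurable (uncurry k))
    (hk₀ : ∀ t θ, 0 ≤ k t θ) (hkα : ∀ t θ, |k t θ| ≤ α) (hu : Integrable u μ)
    (hu₀ : ∀ t, 0 ≤ u t) (huM : ∀ t, u t ≤ M) (hg : Integrable (fun θ => g θ (σ * u θ)) μ)
    (hg₀ : ∀ θ, 0 ≤ g θ (σ * u θ) / σ) (hE : MeasurableSet E) (hM : 0 ≤ M) (hc₁ : 0 ≤ c₁)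
    (hum : ∀ t ∈ E, c₁ * M ≤ u t) (hc : 0 ≤ c)
    (hcE : μ.real univ ≤ c * (c₁ ^ 2 * ∫ t in E, ∫ θ in E, k t θ ∂μ ∂μ))
    (hgc : ∀ θ ∈ E, c * u θ ≤ g θ (σ * u θ) / σ) :
    ∫ t, u t ^ 2 ∂μ ≤ fiberingRatio μ k g u σ := by
  have hsq : ∫ t, u t ^ 2 ∂μ ≤ ∫ _, M ^ 2 ∂μ :=
    integral_mono_of_nonneg (.of_forall fun t => sq_nonneg _) (integrable_const _)
      (.of_forall fun t => pow_le_pow_left₀ (hu₀ t) (huM t) 2)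
  calc ∫ t, u t ^ 2 ∂μ ≤ M ^ 2 * μ.real univ := by
        simpa only [integral_const, smul_eq_mul, mul_comm] using hsq
    _ ≤ M ^ 2 * (c * (c₁ ^ 2 * ∫ t in E, ∫ θ in E, k t θ ∂μ ∂μ)) := by gcongr
    _ = c * (c₁ * M) * (c₁ * M * ∫ t in E, ∫ θ in E, k t θ ∂μ ∂μ) := by ring
    _ ≤ c * (c₁ * M) * ∫ θ in E, transposeIntegral μ k u θ ∂μ := by
        gcongr
        exact mul_setIntegral_setIntegral_le_setIntegral_transposeIntegral hk hk₀ hkα hu hu₀ hE hum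
    _ ≤ fiberingRatio μ k g u σ :=
        mul_setIntegral_transposeIntegral_le_fiberingRatio hk hk₀ hkα hu hu₀ hg hg₀ hE
          (integrable_transposeIntegral hk hkα hu).integrableOn
          fun θ hθ => (mul_le_mul_of_nonneg_left (hum θ hθ) hc).trans (hgc θ hθ)

end FiberingMap

theorem exists_unique_sigma_star_general {X : Type*} [MeasurableSpace X] {μ : Measure X}
    [IsFiniteMeasure μ] {k : X → X → ℝ} (hk : Measurable (uncurry k)) (hk₀ : ∀ t θ, 0 ≤ k t θ)
    {α₁ : ℝ} (hα₁ : 0 ≤ α₁) (hkα₁ : ∀ t θ, k t θ ≤ α₁)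
    {g : X → ℝ → ℝ} (hg_cont : ∀ θ, ContinuousOn (g θ) (Ici 0))
    (hg_nonneg : ∀ θ x, 0 ≤ x → 0 ≤ g θ x)
    {u : X → ℝ} (hu : Measurable u) (hu₀ : ∀ t, 0 ≤ u t) {M : ℝ} (hM : 0 < M)
    (huM : ∀ t, u t ≤ M) (hg_int : ∀ σ > 0, Integrable (fun θ => g θ (σ * u θ)) μ)
    {E : Set X} (hE : MeasurableSet E) (hkE : 0 < ∫ t in E, ∫ θ in E, k t θ ∂μ ∂μ)
    {c₁ : ℝ} (hc₁ : 0 < c₁) (huE : ∀ t ∈ E, c₁ * M ≤ u t)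
    {c₂ : ℝ} (hc₂ : 0 ≤ c₂) (hc₂α₁ : c₂ * α₁ * μ.real univ ≤ 1) {δ₀ : ℝ} (hδ₀ : 0 < δ₀)
    (hg_small : ∀ θ x, 0 ≤ x → x ≤ δ₀ → g θ x ≤ c₂ * x)
    {c₄ : ℝ} (hc₄ : μ.real univ ≤ c₄ * (c₁ ^ 2 * ∫ t in E, ∫ θ in E, k t θ ∂μ ∂μ))
    {x₀ : ℝ} (hx₀ : 0 < x₀) (hg_large : ∀ θ x, x₀ ≤ x → c₄ * x ≤ g θ x)
    (hg_mono : ∀ θ, StrictMonoOn (fun x => g θ x / x) (Ioi 0)) :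
    ∃! σ : ℝ, 0 < σ ∧ nehariFunctional μ k g u σ = 0 := by
  have hkα (t θ : X) : |k t θ| ≤ α₁ := (abs_of_nonneg (hk₀ t θ)).trans_le (hkα₁ t θ)
  have hu₂ : MemLp u 2 μ := .of_bound hu.aestronglyMeasurable M
    (.of_forall fun t => (abs_of_nonneg (hu₀ t)).trans_le (huM t))
  have hu₁ : Integrable u μ := hu₂.integrable one_le_two
  have hg_zero (θ : X) : g θ 0 = 0 :=
    ((hg_small θ 0 le_rfl hδ₀.le).trans_eq (mul_zero c₂)).antisymm (hg_nonneg θ 0 le_rfl)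
  have hratio_nonneg {σ : ℝ} (hσ : 0 < σ) (θ : X) : 0 ≤ g θ (σ * u θ) / σ :=
    div_nonneg (hg_nonneg θ _ (mul_nonneg hσ.le (hu₀ θ))) hσ.le
  have hc₁M : 0 < c₁ * M := mul_pos hc₁ hM
  have hc₄_nonneg : 0 ≤ c₄ :=
    nonneg_of_mul_nonneg_left (measureReal_nonneg.trans hc₄) (by positivity)
  have hweight : 0 < ∫ θ in E, transposeIntegral μ k u θ ∂μ := (mul_pos hc₁M hkE).trans_le
    (mul_setIntegral_setIntegral_le_setIntegral_transposeIntegral hk hk₀ hkα hu₁ hu₀ hE huE)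
  have hsmall : fiberingRatio μ k g u (δ₀ / M) ≤ ∫ t, u t ^ 2 ∂μ := by
    have hσ : 0 < δ₀ / M := div_pos hδ₀ hM
    refine fiberingRatio_le_integral_sq hk₀ hα₁ hkα hu₂ hu₀ (hratio_nonneg hσ) hc₂ hc₂α₁
      fun θ => ?_
    have hle : δ₀ / M * u θ ≤ δ₀ :=
      (mul_le_mul_of_nonneg_left (huM θ) hσ.le).trans_eq (div_mul_cancel₀ δ₀ hM.ne')
    exact (div_le_iff₀ hσ).2 ((hg_small θ _ (mul_nonneg hσ.le (hu₀ θ)) hle).trans_eq (by ring))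
  have hlarge : ∫ t, u t ^ 2 ∂μ ≤ fiberingRatio μ k g u (x₀ / (c₁ * M)) := by
    have hσ : 0 < x₀ / (c₁ * M) := div_pos hx₀ hc₁M
    refine integral_sq_le_fiberingRatio hk hk₀ hkα hu₁ hu₀ huM (hg_int _ hσ) (hratio_nonneg hσ)
      hE hM.le hc₁.le huE hc₄_nonneg hc₄ fun θ hθ => ?_
    have hle : x₀ ≤ x₀ / (c₁ * M) * u θ := (div_mul_cancel₀ x₀ hc₁M.ne').symm.trans_le
      (mul_le_mul_of_nonneg_left (huE θ hθ) hσ.le)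
    exact (le_div_iff₀ hσ).2 ((hg_large θ _ hle).trans_eq' (by ring))
  have hunique := existsUnique_mem_eq_of_strictMonoOn isPreconnected_Ioi
    (strictMonoOn_fiberingRatio hk hk₀ hkα hu₁ hu₀ hg_int hg_zero hg_mono
      (fun t ht => hc₁M.trans_le (huE t ht)) hweight)
    (continuousOn_fiberingRatio hk hk₀ hkα hu₁ hu₀ hg_int hg_zero
      (fun θ => (hg_mono θ).monotoneOn) hg_cont)
    (mem_Ioi.2 (div_pos hδ₀ hM)) (mem_Ioi.2 (div_pos hx₀ hc₁M)) hsmall hlarge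
  refine (existsUnique_congr fun σ => and_congr_right fun hσ => ?_).2 hunique
  exact nehariFunctional_eq_zero_iff hk hkα hu₁ hu₂.integrable_sq (hg_int σ hσ) (ne_of_gt hσ)

lemma abs_le_supNorm {u : ℝ → ℝ} (hu : ContinuousOn u (Icc 0 1)) {t : ℝ} (ht : t ∈ Icc (0 : ℝ) 1) :
    |u t| ≤ supNorm u :=
  le_csSup (isCompact_Icc.image_of_continuousOn hu.abs).bddAbove (mem_image_of_mem _ ht)

lemma setIntegral_unitInterval_eq_intervalIntegral {a b : ℝ} (ha : 0 ≤ a) (hab : a ≤ b)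
    (hb : b ≤ 1) (φ : ℝ → ℝ) :
    ∫ t in ((↑) ⁻¹' Icc a b : Set unitInterval), φ t = ∫ t in a..b, φ t := by
  rw [unitInterval.measurePreserving_coe.setIntegral_preimage_emb
      (.subtype_coe measurableSet_Icc) φ,
    Measure.restrict_restrict_of_subset (Icc_subset_Icc ha hb), integral_Icc_eq_integral_Ioc,
    intervalIntegral.integral_of_le hab]

lemma integral_unitInterval_eq_intervalIntegral (φ : ℝ → ℝ) :
    ∫ t : unitInterval, φ t = ∫ t in (0 : ℝ)..1, φ t := by
  simpa using setIntegral_unitInterval_eq_intervalIntegral le_rfl zero_le_one le_rfl φ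

lemma nehariF_eq_nehariFunctional (k₁ f : ℝ → ℝ → ℝ) (u v : ℝ → ℝ) (σ : ℝ) :
    nehariF k₁ f u v σ = nehariFunctional (volume : Measure unitInterval) (fun t θ => k₁ t θ)
      (fun θ x => f x (v θ)) (fun t => u t) σ := by
  simp only [nehariF, nehariFunctional, ← integral_unitInterval_eq_intervalIntegral]

theorem exists_unique_sigma_star
    -- k₁ is a nonnegative continuous function on [0,1]²
    (k₁ : ℝ → ℝ → ℝ)
    (hk₁cont : ContinuousOn (fun p : ℝ × ℝ => k₁ p.1 p.2)
      (Set.Icc 0 1 ×ˢ Set.Icc 0 1))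
    (hk₁nonneg : ∀ t ∈ Set.Icc (0:ℝ) 1, ∀ θ ∈ Set.Icc (0:ℝ) 1, 0 ≤ k₁ t θ)
    -- f is continuous with f(x,y) ≥ 0 for x ≥ 0
    (f : ℝ → ℝ → ℝ) (hfcont : Continuous (fun p : ℝ × ℝ => f p.1 p.2))
    (hfnonneg : ∀ x : ℝ, 0 ≤ x → ∀ y : ℝ, 0 ≤ f x y)
    (R : ℝ) (hR : 0 < R)
    -- condition (H1)
    (Φ : ℝ → ℝ) (hΦcont : ContinuousOn Φ (Set.Icc 0 1))
    (hΦnonneg : ∀ θ ∈ Set.Icc (0:ℝ) 1, 0 ≤ Φ θ)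
    (a b : ℝ) (ha : 0 ≤ a) (hab : a ≤ b) (hb : b ≤ 1)
    (c₁ : ℝ) (hc₁pos : 0 < c₁) (hc₁le : c₁ ≤ 1)
    (hk₁upper : ∀ t ∈ Set.Icc (0:ℝ) 1, ∀ θ ∈ Set.Icc (0:ℝ) 1, k₁ t θ ≤ Φ θ)
    (hk₁lower : ∀ t ∈ Set.Icc a b, ∀ θ ∈ Set.Icc (0:ℝ) 1, c₁ * Φ θ ≤ k₁ t θ)
    -- α₁ := max_{t∈[0,1]} Φ(t) > 0 and α₂ := ∫ₐᵇ∫ₐᵇ k₁(t,θ) dθ dt > 0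
    (α₁ : ℝ) (hα₁ : IsGreatest (Φ '' Set.Icc (0:ℝ) 1) α₁) (hα₁pos : 0 < α₁)
    (α₂ : ℝ) (hα₂ : α₂ = ∫ t in a..b, ∫ θ in a..b, k₁ t θ) (hα₂pos : 0 < α₂)
    -- quantitative form of (H2)
    (c₂ : ℝ) (hc₂pos : 0 < c₂) (hc₂lt : c₂ < 1 / α₁)
    (δ₀ : ℝ) (hδ₀ : 0 < δ₀)
    (hH2 : ∀ x : ℝ, 0 ≤ x → x ≤ δ₀ → ∀ y : ℝ, |y| ≤ R → f x y ≤ c₂ * x)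
    -- quantitative form of (H3)
    (c₄ : ℝ) (hc₄ : 1 / (c₁ ^ 2 * α₂) < c₄)
    (x₀ : ℝ) (hx₀ : 0 < x₀)
    (hH3 : ∀ x : ℝ, x₀ ≤ x → ∀ y : ℝ, |y| ≤ R → c₄ * x ≤ f x y)
    -- condition (H4)
    (hH4 : ∀ y : ℝ, |y| ≤ R → StrictMonoOn (fun x => f x y / x) (Set.Ioi (0:ℝ))) :
    ∀ u v : ℝ → ℝ, memK₁ a b c₁ u → (∃ t ∈ Set.Icc (0:ℝ) 1, u t ≠ 0) →
      ContinuousOn v (Set.Icc 0 1) → (∀ t ∈ Set.Icc (0:ℝ) 1, |v t| ≤ R) →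
      ∃! σ : ℝ, 0 < σ ∧ nehariF k₁ f u v σ = 0 := by
  intro u v ⟨hu, hu₀, huE⟩ ⟨t₁, ht₁, hut₁⟩ hv hvR
  have hM : 0 < supNorm u := (abs_pos.2 hut₁).trans_le (abs_le_supNorm hu ht₁)
  have hu_cont : Continuous (fun t : unitInterval => u t) := hu.domRestrict
  have hv_cont : Continuous (fun t : unitInterval => v t) := hv.domRestrict
  have hα₂_eq : α₂ = ∫ t in ((↑) ⁻¹' Icc a b : Set unitInterval),
      ∫ θ in ((↑) ⁻¹' Icc a b : Set unitInterval), k₁ t θ := by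
    simp only [hα₂, ← setIntegral_unitInterval_eq_intervalIntegral ha hab hb]
  simp only [nehariF_eq_nehariFunctional]
  refine exists_unique_sigma_star_general (k := fun t θ : unitInterval => k₁ t θ)
    (continuous_domRestrict_prod hk₁cont).measurable (fun t θ => hk₁nonneg t t.2 θ θ.2) hα₁pos.le
    (fun t θ => (hk₁upper t t.2 θ θ.2).trans (hα₁.2 ⟨θ, θ.2, rfl⟩))
    (fun θ => by fun_prop) (fun θ x hx => hfnonneg x hx (v θ)) hu_cont.measurable
    (fun t => hu₀ t t.2) hM (fun t => (le_abs_self _).trans (abs_le_supNorm hu t.2))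
    (fun σ _ => ?_) (measurableSet_Icc.preimage measurable_subtype_coe) (hα₂_eq ▸ hα₂pos)
    hc₁pos (fun t ht => huE t ht) hc₂pos.le ?_ hδ₀ (fun θ x hx hxδ => hH2 x hx hxδ _ (hvR θ θ.2))
    ?_ hx₀ (fun θ x hx => hH3 x hx _ (hvR θ θ.2)) (fun θ => hH4 _ (hvR θ θ.2))
  · exact (hfcont.comp ((hu_cont.const_mul σ).prodMk hv_cont)).integrable_of_hasCompactSupport
      (.of_compactSpace _)
  · simpa using ((lt_div_iff₀ hα₁pos).1 hc₂lt).le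
  · rw [← hα₂_eq, probReal_univ]
    exact ((div_lt_iff₀ (by positivity)).1 hc₄).le
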